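/- Yamada's theorem: Let A and B be n×n type-II matrices with A symmetric, let d ∈ ℂ satisfy d² = n, and let V be the associated 4n×4n matrix (which is a symmetric type-II matrix). Then (A,B) is a Jones pair (equivalently, an invertible Jones pair) if and only if V is a spin model, i.e. ((2d)^{-1}V, V^(-)) is an invertible Jones pair of 4n×4n matrices. -/

import Mathlib

open Matrix

variable {m : Type*} [Fintype m] [DecidableEq m]

/-- The Schur (entrywise) inverse `A^(-)` of a matrix: `(A^(-))_{ij} = (A_{ij})⁻¹`. -/
noncomputable def sinv (A : Matrix m m ℂ) : Matrix m m ℂ := Matrix.of fun i j => (A i j)⁻¹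

/-- A type-II matrix: a Schur invertible matrix `W` with `W * (W^(-))ᵀ = n • I`,
where `n` is the size of the matrix. -/
def IsTypeII (A : Matrix m m ℂ) : Prop :=
  (∀ i j, A i j ≠ 0) ∧ A * (sinv A)ᵀ = (Fintype.card m : ℂ) • (1 : Matrix m m ℂ)

/-- `v_{ij} = (A e_i) ∘ (B e_j)`: the entrywise product of column `i` of `A`
with column `j` of `B`. -/
def colProd (A B : Matrix m m ℂ) (i j : m) : m → ℂ := fun k => A k i * B k j

/-- Membership in the Nomura algebra `N_{A,B}`: every `v_{ij}` is an eigenvector of `M`. -/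
def InNomura (A B M : Matrix m m ℂ) : Prop :=
  ∀ i j, ∃ c : ℂ, M.mulVec (colProd A B i j) = c • colProd A B i j

/-- `S = Θ_{A,B}(M)`: the matrix of eigenvalues, i.e. `M v_{ij} = S_{ij} v_{ij}` for all `i,j`. -/
def IsTheta (A B M S : Matrix m m ℂ) : Prop :=
  ∀ i j, M.mulVec (colProd A B i j) = S i j • colProd A B i j

/-- `(A,B)` is a Jones pair: `A` invertible, `B` Schur invertible, and
`X_A Δ_B X_A = Δ_B X_A Δ_B` and `X_A Δ_{Bᵀ} X_A = Δ_{Bᵀ} X_A Δ_{Bᵀ}`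
as operators on matrices. -/
def IsJonesPair (A B : Matrix m m ℂ) : Prop :=
  IsUnit A ∧ (∀ i j, B i j ≠ 0) ∧
  (∀ M : Matrix m m ℂ, A * (B ⊙ (A * M)) = B ⊙ (A * (B ⊙ M))) ∧
  (∀ M : Matrix m m ℂ, A * (Bᵀ ⊙ (A * M)) = Bᵀ ⊙ (A * (Bᵀ ⊙ M)))

/-- An invertible Jones pair: a Jones pair in which moreover `A` is Schur
invertible and `B` is invertible. -/
def IsInvertibleJonesPair (A B : Matrix m m ℂ) : Prop :=
  IsJonesPair A B ∧ (∀ i j, A i j ≠ 0) ∧ IsUnit B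

/-- `W` is a spin model: for some `d` with `d² = n`, `(d⁻¹ W, W^(-))` is an
invertible Jones pair. -/
def IsSpinModel (W : Matrix m m ℂ) : Prop :=
  ∃ d : ℂ, d ^ 2 = (Fintype.card m : ℂ) ∧ IsInvertibleJonesPair (d⁻¹ • W) (sinv W)

/-- Given an invertible Jones pair `(A,B)` with `A` symmetric, `K` is paired with
`H ∈ N_{A,B}` if `Kᵀ ∈ N_{A,Bᵀ}` and `Θ_{A,B}(H) = (Θ_{A,Bᵀ}(Kᵀ))ᵀ`. -/
def Paired (A B H K : Matrix m m ℂ) : Prop :=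
  ∃ S : Matrix m m ℂ, IsTheta A B H S ∧ IsTheta A Bᵀ Kᵀ Sᵀ

/-- The `4n × 4n` matrix with `4 × 4` block structure
`[[P, Q, R, R], [Q, P, R, R], [S, S, T, U], [S, S, U, T]]`. -/
def blockMat {n : ℕ} (P Q R S T U : Matrix (Fin n) (Fin n) ℂ) :
    Matrix (Fin 4 × Fin n) (Fin 4 × Fin n) ℂ :=
  Matrix.of fun x y =>
    (![![P, Q, R, R], ![Q, P, R, R], ![S, S, T, U], ![S, S, U, T]] x.1 y.1) x.2 y.2

/-- Yamada's `4n × 4n` matrix `V` built from `A`, `B` and `d` with `d² = n`. -/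
noncomputable def Vmat {n : ℕ} (A B : Matrix (Fin n) (Fin n) ℂ) (d : ℂ) :
    Matrix (Fin 4 × Fin n) (Fin 4 × Fin n) ℂ :=
  blockMat (d • A) (-(d • A)) (sinv B) (sinv B)ᵀ (d • A) (-(d • A))

/-!
The two Jones relations say that the vectors `v_{ij}` formed from `A` and `B`, respectively from `A`
and `Bᵀ`, are eigenvectors of `A` with eigenvalues `B_{ij}`, respectively `B_{ji}`. For a symmetric
type-II matrix `V`, being a spin model means that the star-triangle relation holds at every triple
of indices. Split the `4 × 4` blocks of `V` into two halves, upper and lower. In a star-triangle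
sum of `V`, one half of the terms cancels because of the signs of `±dA`. At a triple
(upper, upper, lower) what remains is exactly the Jones relation of `(A, B)`. The relations at the
other triples with at most one lower index follow from it: dualizing the bases `v_{ij}` exchanges
the pairs `(A, B)` and `(A^(-), B^(-))`, and summing against the rows of `B` solves the eigenvector
equations for `A⁻¹`. Exchanging the two halves of `V` replaces `B` by `Bᵀ`, which settles all the
remaining triples.
-/

section TypeII

variable {ι : Type*}

theorem sinv_sinv (A : Matrix ι ι ℂ) : sinv (sinv A) = A := by
  ext
  simp [sinv]

theorem transpose_sinv (A : Matrix ι ι ℂ) : (sinv A)ᵀ = sinv Aᵀ := rfl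

variable [Fintype ι] [DecidableEq ι] {W : Matrix ι ι ℂ}

theorem isTypeII_iff_sum :
    IsTypeII W ↔ (∀ x y, W x y ≠ 0) ∧
      ∀ x y, ∑ k, W x k / W y k = if x = y then (Fintype.card ι : ℂ) else 0 := by
  refine and_congr_right fun _ => ?_
  simp [← Matrix.ext_iff, mul_apply, sinv, one_apply, div_eq_mul_inv]

namespace IsTypeII

protected theorem sinv (hW : IsTypeII W) : IsTypeII (sinv W) := by
  refine ⟨fun x y => inv_ne_zero (hW.1 x y), ?_⟩
  simpa [sinv_sinv] using congrArg Matrix.transpose hW.2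

theorem mul_smul_sinv_transpose (hW : IsTypeII W) :
    W * ((Fintype.card ι : ℂ)⁻¹ • (sinv W)ᵀ) = 1 := by
  cases isEmpty_or_nonempty ι
  · exact Subsingleton.elim _ _
  · rw [Matrix.mul_smul, hW.2, inv_smul_smul₀ (by simp)]

theorem smul_sinv_transpose_mul (hW : IsTypeII W) :
    ((Fintype.card ι : ℂ)⁻¹ • (sinv W)ᵀ) * W = 1 :=
  mul_eq_one_comm.mp hW.mul_smul_sinv_transpose

theorem isUnit (hW : IsTypeII W) : IsUnit W :=
  .of_mul_eq_one _ hW.mul_smul_sinv_transpose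

protected theorem transpose (hW : IsTypeII W) : IsTypeII Wᵀ := by
  refine ⟨fun x y => hW.1 y x, ?_⟩
  cases isEmpty_or_nonempty ι
  · exact Subsingleton.elim _ _
  · have h : (sinv W)ᵀ * W = (Fintype.card ι : ℂ) • 1 := by
      rw [← hW.smul_sinv_transpose_mul, smul_mul, smul_inv_smul₀ (by simp)]
    simpa [transpose_sinv] using congrArg Matrix.transpose h

end IsTypeII

end TypeII

section Nomura

variable {ι : Type*} [Fintype ι] {A B M N S : Matrix ι ι ℂ}

theorem isTheta_iff_sum :
    IsTheta A B M S ↔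
      ∀ a i j, ∑ k, M a k * (A k i * B k j) = S i j * (A a i * B a j) :=
  ⟨fun h a i j => congrFun (h i j) a, fun h i j => funext fun a => h a i j⟩

theorem isTheta_iff_operator :
    IsTheta A B M S ↔ ∀ N, M * (B ⊙ (A * N)) = B ⊙ (A * (S ⊙ N)) := by
  classical
  rw [isTheta_iff_sum]
  refine ⟨fun h N => ?_, fun h a i j => ?_⟩
  · ext a j
    simp only [mul_apply, hadamard_apply, Finset.mul_sum]
    rw [Finset.sum_comm]
    refine Finset.sum_congr rfl fun i _ => ?_
    calc ∑ k, M a k * (B k j * (A k i * N i j))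
        = (∑ k, M a k * (A k i * B k j)) * N i j := by
          rw [Finset.sum_mul]
          exact Finset.sum_congr rfl fun k _ => by ring
      _ = B a j * (A a i * (S i j * N i j)) := by rw [h]; ring
  · have hij := congrFun (congrFun (h (single i j 1)) a) j
    simp only [mul_apply, hadamard_apply, single_apply, and_true, mul_ite, mul_one, mul_zero,
      Finset.sum_ite_eq, Finset.mem_univ, if_true] at hij
    simpa only [mul_comm, mul_left_comm] using hij

variable [DecidableEq ι]

theorem isTheta_iff_mul :
    IsTheta A B M S ↔ ∀ j, M * (diagonal (B.col j) * A) =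
      diagonal (B.col j) * A * diagonal (S.col j) := by
  simp only [isTheta_iff_sum, ← Matrix.ext_iff, mul_apply (M := M), mul_diagonal, diagonal_mul,
    col_apply]
  refine ⟨fun h j a i => ?_, fun h a i j => ?_⟩
  · simpa only [mul_comm] using h a i j
  · simpa only [mul_comm] using h j a i

theorem isJonesPair_iff_isTheta :
    IsJonesPair A B ↔
      IsUnit A ∧ (∀ i j, B i j ≠ 0) ∧ IsTheta A B A B ∧ IsTheta A Bᵀ A Bᵀ := by
  simp only [IsJonesPair, isTheta_iff_operator]

namespace IsTheta

/-- For fixed `j` the `v_{ij}` form a basis whose dual basis is, up to scale, the same family for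
`(A^(-), B^(-))`. -/
theorem sinv_transpose (hA : IsTypeII A) (hB : ∀ i j, B i j ≠ 0) (h : IsTheta A B M S) :
    IsTheta (sinv A) (sinv B) Mᵀ S := by
  rw [isTheta_iff_mul] at h ⊢
  intro j
  cases isEmpty_or_nonempty ι
  · exact Subsingleton.elim _ _
  have hDE : diagonal (B.col j) * diagonal ((sinv B).col j) = 1 := by
    simp [diagonal_mul_diagonal, sinv, hB]
  let D : (Matrix ι ι ℂ)ˣ := ⟨_, _, hDE, mul_eq_one_comm.mp hDE⟩
  let U : (Matrix ι ι ℂ)ˣ := ⟨_, _, hA.mul_smul_sinv_transpose, hA.smul_sinv_transpose_mul⟩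
  have hDU : SemiconjBy (D * U).val (diagonal (S.col j)) M := (h j).symm
  have hdual := congrArg transpose hDU.units_inv_symm_left.eq
  simpa [D, U] using hdual

theorem of_mul_eq_one (hNM : N * M = 1) (h : IsTheta A B M S) : IsTheta A B N (sinv S) := by
  intro i j
  have hv : S i j • N.mulVec (colProd A B i j) = colProd A B i j := by
    rw [← mulVec_smul, ← h i j, mulVec_mulVec, hNM, one_mulVec]
  by_cases hS : S i j = 0
  · have hv0 : colProd A B i j = 0 := by rw [← hv, hS, zero_smul]
    simp [hv0]
  · exact (eq_inv_smul_iff₀ hS).mpr hv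

/-- The rows of `B` and those of `B^(-)` are dual to each other, so the eigenvector equations can be
solved for `M`. -/
theorem sum_mul_div_mul (hB : IsTypeII B) (h : IsTheta A B M S) (a l i : ι) :
    (∑ j, S i j * B a j / B l j) * A a i = Fintype.card ι * (M a l * A l i) := by
  rw [isTheta_iff_sum] at h
  have hBl := (isTypeII_iff_sum.mp hB).2
  calc (∑ j, S i j * B a j / B l j) * A a i
      = ∑ j, (∑ k, M a k * (A k i * B k j)) / B l j := by
        simp only [h, Finset.sum_mul]
        exact Finset.sum_congr rfl fun j _ => by ring
    _ = ∑ k, M a k * A k i * ∑ j, B k j / B l j := by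
        simp only [Finset.sum_div, Finset.mul_sum]
        rw [Finset.sum_comm]
        exact Finset.sum_congr rfl fun k _ => Finset.sum_congr rfl fun j _ => by ring
    _ = Fintype.card ι * (M a l * A l i) := by
        simp only [hBl, mul_ite, mul_zero, Finset.sum_ite_eq', Finset.mem_univ, if_true]
        ring

end IsTheta
end Nomura

section StarTriangle

variable {ι : Type*} [Fintype ι] {W : Matrix ι ι ℂ} {e : ℂ} {x z y : ι}

/-- The star-triangle relation of a spin model `W` with modulus `e`, at the triple `(x, z, y)`. -/
def StarTriangle (W : Matrix ι ι ℂ) (e : ℂ) (x z y : ι) : Prop :=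
  ∑ k, W x k * W k z / W k y = e * (W x z / (W x y * W z y))

theorem StarTriangle.swap (hW : W.IsSymm) (h : StarTriangle W e x z y) :
    StarTriangle W e z x y := by
  unfold StarTriangle at h ⊢
  rw [hW.apply, mul_comm (W z y), ← h]
  exact Finset.sum_congr rfl fun k _ => by rw [hW.apply k z, hW.apply x k, mul_comm]

theorem starTriangle_submatrix_iff (σ : ι ≃ ι) :
    StarTriangle (W.submatrix σ σ) e x z y ↔ StarTriangle W e (σ x) (σ z) (σ y) := by
  simp only [StarTriangle, submatrix_apply]
  rw [Equiv.sum_comp σ fun k => W (σ x) k * W k (σ z) / W k (σ y)]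

theorem isTheta_smul_iff_starTriangle (he : e ≠ 0) :
    IsTheta (e⁻¹ • W) (sinv W) (e⁻¹ • W) (sinv W) ↔ ∀ x z y, StarTriangle W e x z y := by
  rw [isTheta_iff_sum]
  refine forall₃_congr fun x z y => ?_
  have hsum : ∑ k, (e⁻¹ • W) x k * ((e⁻¹ • W) k z * sinv W k y) =
      e⁻¹ ^ 2 * ∑ k, W x k * W k z / W k y := by
    rw [Finset.mul_sum]
    refine Finset.sum_congr rfl fun k _ => ?_
    simp only [Matrix.smul_apply, smul_eq_mul, sinv, of_apply]
    ring
  have hval : sinv W z y * ((e⁻¹ • W) x z * sinv W x y) =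
      e⁻¹ ^ 2 * (e * (W x z / (W x y * W z y))) := by
    simp only [Matrix.smul_apply, smul_eq_mul, sinv, of_apply]
    field_simp
  rw [hsum, hval, StarTriangle, mul_right_inj' (pow_ne_zero 2 (inv_ne_zero he))]

variable [DecidableEq ι]

theorem IsTypeII.isInvertibleJonesPair_iff_starTriangle (hW : IsTypeII W) (hs : W.IsSymm)
    (he : e ≠ 0) :
    IsInvertibleJonesPair (e⁻¹ • W) (sinv W) ↔ ∀ x z y, StarTriangle W e x z y := by
  rw [IsInvertibleJonesPair, isJonesPair_iff_isTheta, transpose_sinv, hs.eq,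
    isTheta_smul_iff_starTriangle he]
  refine ⟨fun h => h.1.2.2.1, fun h => ⟨⟨?_, hW.sinv.1, h, h⟩, ?_, hW.sinv.isUnit⟩⟩
  · exact hW.isUnit.smul (Units.mk0 _ (inv_ne_zero he))
  · exact fun x y => mul_ne_zero (inv_ne_zero he) (hW.1 x y)

end StarTriangle

section JonesPair

variable {ι : Type*} [Fintype ι] [DecidableEq ι] {A B : Matrix ι ι ℂ}

theorem IsTheta.sinv_of_isSymm (hA : IsTypeII A) (hB : ∀ i j, B i j ≠ 0) (hs : A.IsSymm)
    (h : IsTheta A B A B) : IsTheta (sinv A) (sinv B) A B := by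
  simpa only [hs.eq] using h.sinv_transpose hA hB

theorem IsTheta.sum_div_mul (hA : IsTypeII A) (hB : IsTypeII B) (hs : A.IsSymm)
    (h : IsTheta A B A B) (a i j : ι) :
    ∑ k, B j k / (B a k * B i k) = A a i / (A a j * A i j) := by
  have : Nonempty ι := ⟨a⟩
  have hc : (Fintype.card ι : ℂ) ≠ 0 := by simp
  have hAai : sinv A a i * A a i = 1 := inv_mul_cancel₀ (hA.1 a i)
  have hinv : IsTheta (sinv A) (sinv B) ((Fintype.card ι : ℂ)⁻¹ • sinv A) (sinv B) := by
    simpa using (h.of_mul_eq_one hA.smul_sinv_transpose_mul).sinv_transpose hA hB.1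
  calc ∑ k, B j k / (B a k * B i k)
      = (∑ k, sinv B i k * sinv B a k / sinv B j k) * sinv A a i * A a i := by
        rw [mul_assoc, hAai, mul_one]
        refine Finset.sum_congr rfl fun k _ => ?_
        simp only [sinv, of_apply]
        field_simp
    _ = A a i / (A a j * A i j) := by
        rw [hinv.sum_mul_div_mul hB.sinv]
        simp only [Matrix.smul_apply, smul_eq_mul, sinv, of_apply, hs.apply]
        field_simp

end JonesPair

namespace Vmat

variable {n : ℕ} {A B : Matrix (Fin n) (Fin n) ℂ} {d : ℂ}

/-- Row indices of the upper half of `V`: the `a`-th row of the block row `p`. -/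
def upper (p : Fin 2) (a : Fin n) : Fin 4 × Fin n := (Fin.castAdd 2 p, a)

/-- Row indices of the lower half of `V`: the `a`-th row of the block row `2 + p`. -/
def lower (p : Fin 2) (a : Fin n) : Fin 4 × Fin n := (Fin.natAdd 2 p, a)

/-- The signs `±1` with which `dA` occurs in `V`: its `(p, q)` block within a half is
`sign p * sign q * d • A`. -/
def sign (p : Fin 2) : ℂ := ![1, -1] p

/-- The exchange of the two halves of the index set of `V`. -/
def swapHalves : Fin 4 × Fin n ≃ Fin 4 × Fin n :=
  (finAddFlip (m := 2) (n := 2)).prodCongr (Equiv.refl (Fin n))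

theorem eq_upper_or_eq_lower (x : Fin 4 × Fin n) :
    (∃ p a, x = upper p a) ∨ ∃ p a, x = lower p a := by
  obtain ⟨b, a⟩ := x
  induction b using Fin.addCases (m := 2) (n := 2) with
  | left p => exact .inl ⟨p, a, rfl⟩
  | right p => exact .inr ⟨p, a, rfl⟩

theorem upper_inj {p q : Fin 2} {a b : Fin n} : upper p a = upper q b ↔ p = q ∧ a = b := by
  rw [upper, upper, Prod.mk.injEq, (Fin.castAdd_injective 2 2).eq_iff]

theorem upper_ne_lower (p q : Fin 2) (a b : Fin n) : upper p a ≠ lower q b := by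
  intro h
  have hval : p.val = 2 + q.val := congrArg (fun x => x.1.val) h
  omega

@[simp]
theorem swapHalves_upper (p : Fin 2) (a : Fin n) : swapHalves (upper p a) = lower p a := by
  fin_cases p <;> rfl

@[simp]
theorem swapHalves_lower (p : Fin 2) (a : Fin n) : swapHalves (lower p a) = upper p a := by
  fin_cases p <;> rfl

theorem sum_index (f : Fin 4 × Fin n → ℂ) :
    ∑ x, f x = ∑ k, (f (upper 0 k) + f (upper 1 k) + f (lower 0 k) + f (lower 1 k)) := by
  simp only [Fintype.sum_prod_type, Fin.sum_univ_four, Finset.sum_add_distrib]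
  rfl

theorem sign_zero : sign 0 = 1 := rfl

theorem sign_one : sign 1 = -1 := rfl

theorem sign_mul_self (p : Fin 2) : sign p * sign p = 1 := by
  fin_cases p <;> simp [sign]

theorem sign_mul_sign (p q : Fin 2) : sign p * sign q = if p = q then 1 else -1 := by
  fin_cases p <;> fin_cases q <;> simp [sign]

theorem sign_ne_zero (p : Fin 2) : sign p ≠ 0 :=
  left_ne_zero_of_mul_eq_one (sign_mul_self p)

theorem inv_sign (p : Fin 2) : (sign p)⁻¹ = sign p :=
  inv_eq_of_mul_eq_one_left (sign_mul_self p)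

theorem apply_upper_upper (p q : Fin 2) (a b : Fin n) :
    Vmat A B d (upper p a) (upper q b) = sign p * sign q * d * A a b := by
  have hblock : Vmat A B d (upper p a) (upper q b) = if p = q then d * A a b else -(d * A a b) := by
    fin_cases p <;> fin_cases q <;> rfl
  rw [hblock, sign_mul_sign]
  split_ifs <;> ring

theorem apply_lower_lower (p q : Fin 2) (a b : Fin n) :
    Vmat A B d (lower p a) (lower q b) = sign p * sign q * d * A a b := by
  have hblock : Vmat A B d (lower p a) (lower q b) = if p = q then d * A a b else -(d * A a b) := by
    fin_cases p <;> fin_cases q <;> rfl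
  rw [hblock, sign_mul_sign]
  split_ifs <;> ring

theorem apply_upper_lower (p q : Fin 2) (a b : Fin n) :
    Vmat A B d (upper p a) (lower q b) = (B a b)⁻¹ := by
  fin_cases p <;> fin_cases q <;> rfl

theorem apply_lower_upper (p q : Fin 2) (a b : Fin n) :
    Vmat A B d (lower p a) (upper q b) = (B b a)⁻¹ := by
  fin_cases p <;> fin_cases q <;> rfl

theorem isSymm (hs : A.IsSymm) : (Vmat A B d).IsSymm := by
  refine IsSymm.ext fun x y => ?_
  rcases eq_upper_or_eq_lower x with ⟨p, a, rfl⟩ | ⟨p, a, rfl⟩ <;>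
    rcases eq_upper_or_eq_lower y with ⟨q, b, rfl⟩ | ⟨q, b, rfl⟩ <;>
    simp only [apply_upper_upper, apply_lower_lower, apply_upper_lower, apply_lower_upper,
      hs.apply a b, mul_comm (sign p)]

theorem submatrix_swapHalves :
    (Vmat A B d).submatrix swapHalves swapHalves = Vmat A Bᵀ d := by
  ext x y
  rcases eq_upper_or_eq_lower x with ⟨p, a, rfl⟩ | ⟨p, a, rfl⟩ <;>
    rcases eq_upper_or_eq_lower y with ⟨q, b, rfl⟩ | ⟨q, b, rfl⟩ <;>
    simp [apply_upper_upper, apply_lower_lower, apply_upper_lower, apply_lower_upper]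

theorem apply_ne_zero (hA : ∀ i j, A i j ≠ 0) (hB : ∀ i j, B i j ≠ 0) (hd : d ≠ 0)
    (x y : Fin 4 × Fin n) : Vmat A B d x y ≠ 0 := by
  rcases eq_upper_or_eq_lower x with ⟨p, a, rfl⟩ | ⟨p, a, rfl⟩ <;>
    rcases eq_upper_or_eq_lower y with ⟨q, b, rfl⟩ | ⟨q, b, rfl⟩ <;>
    simp [apply_upper_upper, apply_lower_lower, apply_upper_lower, apply_lower_upper, hA, hB, hd,
      sign_ne_zero]

theorem sum_upper_div_upper (hd : d ≠ 0) (p q : Fin 2) (a b : Fin n) :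
    ∑ x, Vmat A B d (upper p a) x / Vmat A B d (upper q b) x =
      2 * (sign p * sign q) * ∑ k, A a k / A b k + 2 * ∑ k, B b k / B a k := by
  rw [sum_index, Finset.mul_sum, Finset.mul_sum, ← Finset.sum_add_distrib]
  refine Finset.sum_congr rfl fun k _ => ?_
  simp only [apply_upper_upper, apply_upper_lower, sign_zero, sign_one, div_eq_mul_inv, mul_inv,
    inv_inv, inv_sign]
  linear_combination (2 * (sign p * sign q) * (A a k * (A b k)⁻¹)) * mul_inv_cancel₀ hd

theorem sum_upper_div_lower (p q : Fin 2) (a b : Fin n) :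
    ∑ x, Vmat A B d (upper p a) x / Vmat A B d (lower q b) x = 0 := by
  rw [sum_index]
  refine Finset.sum_eq_zero fun k _ => ?_
  simp only [apply_upper_upper, apply_lower_upper, apply_upper_lower, apply_lower_lower,
    sign_zero, sign_one]
  ring

theorem sum_upper_div (hA : IsTypeII A) (hB : IsTypeII B) (hd : d ≠ 0) (p : Fin 2) (a : Fin n)
    (y : Fin 4 × Fin n) :
    ∑ x, Vmat A B d (upper p a) x / Vmat A B d y x = if upper p a = y then 4 * (n : ℂ) else 0 := by
  rcases eq_upper_or_eq_lower y with ⟨q, b, rfl⟩ | ⟨q, b, rfl⟩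
  · rw [sum_upper_div_upper hd, (isTypeII_iff_sum.mp hA).2, (isTypeII_iff_sum.mp hB).2,
      sign_mul_sign, Fintype.card_fin]
    simp only [upper_inj, ite_and, eq_comm (a := b)]
    split_ifs <;> ring
  · rw [sum_upper_div_lower, if_neg (upper_ne_lower p q a b)]

theorem isTypeII (hA : IsTypeII A) (hB : IsTypeII B) (hd : d ≠ 0) : IsTypeII (Vmat A B d) := by
  refine isTypeII_iff_sum.mpr ⟨apply_ne_zero hA.1 hB.1 hd, fun x y => ?_⟩
  have hcard : (Fintype.card (Fin 4 × Fin n) : ℂ) = 4 * n := by simp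
  rw [hcard]
  rcases eq_upper_or_eq_lower x with ⟨p, a, rfl⟩ | ⟨p, a, rfl⟩
  · exact sum_upper_div hA hB hd p a y
  · obtain ⟨y, rfl⟩ := swapHalves.surjective y
    have hsum := sum_upper_div hA hB.transpose hd p a y
    simp only [← submatrix_swapHalves (B := B), submatrix_apply, swapHalves_upper] at hsum
    rw [Equiv.sum_comp swapHalves fun x => Vmat A B d (lower p a) x / Vmat A B d (swapHalves y) x]
      at hsum
    simpa only [← swapHalves_upper, swapHalves.apply_eq_iff_eq] using hsum

theorem starTriangle_transpose_iff {e : ℂ} {x z y : Fin 4 × Fin n} :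
    StarTriangle (Vmat A Bᵀ d) e x z y ↔
      StarTriangle (Vmat A B d) e (swapHalves x) (swapHalves z) (swapHalves y) := by
  rw [← submatrix_swapHalves, starTriangle_submatrix_iff]

theorem starTriangle_upper_upper_lower_iff (hd : d ≠ 0) (p q r : Fin 2) (a i j : Fin n) :
    StarTriangle (Vmat A B d) (2 * d) (upper p a) (upper q i) (lower r j) ↔
      ∑ k, A a k * (A k i * B k j) = B i j * (A a i * B a j) := by
  have hc : 2 * d ^ 2 * (sign p * sign q) ≠ 0 := by simp [hd, sign_ne_zero]
  rw [StarTriangle, sum_index]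
  conv_rhs => rw [← mul_right_inj' hc, Finset.mul_sum]
  simp only [apply_upper_upper, apply_lower_upper, apply_upper_lower, apply_lower_lower,
    sign_zero, sign_one, inv_inv, div_eq_mul_inv, mul_inv]
  refine Eq.congr (Finset.sum_congr rfl fun k _ => ?_) ?_ <;> ring

theorem starTriangle_upper_upper_upper_iff (hd : d ≠ 0) (p q r : Fin 2) (a i j : Fin n) :
    StarTriangle (Vmat A B d) (2 * d) (upper p a) (upper q i) (upper r j) ↔
      ∑ k, B j k / (B a k * B i k) = A a i / (A a j * A i j) := by
  rw [StarTriangle, sum_index]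
  conv_rhs => rw [← mul_right_inj' (two_ne_zero' ℂ), Finset.mul_sum]
  simp only [apply_upper_upper, apply_lower_upper, apply_upper_lower, sign_zero, sign_one,
    div_eq_mul_inv, mul_inv, inv_inv, inv_sign]
  refine Eq.congr (Finset.sum_congr rfl fun k _ => ?_) ?_
  · ring
  · have hsign : (sign p * sign p) * (sign q * sign q) * (sign r * sign r) = 1 := by
      simp only [sign_mul_self, mul_one]
    have hdd := mul_inv_cancel₀ hd
    linear_combination (2 * (A a i * (A a j)⁻¹ * (A i j)⁻¹)) *
      ((d * d⁻¹) ^ 2 * hsign + (d * d⁻¹ + 1) * hdd)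

theorem starTriangle_upper_lower_upper_iff (hd : d ≠ 0) (p q r : Fin 2) (a i j : Fin n) :
    StarTriangle (Vmat A B d) (2 * d) (upper p a) (lower q i) (upper r j) ↔
      ∑ k, A a k * (sinv A k j * sinv B k i) = B j i * (sinv A a j * sinv B a i) := by
  have hc : 2 * (sign p * sign r) ≠ 0 := by simp [sign_ne_zero]
  have hdd := mul_inv_cancel₀ hd
  rw [StarTriangle, sum_index]
  conv_rhs => rw [← mul_right_inj' hc, Finset.mul_sum]
  simp only [apply_upper_upper, apply_lower_upper, apply_upper_lower, apply_lower_lower,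
    sign_zero, sign_one, sinv, of_apply, div_eq_mul_inv, mul_inv, inv_inv, inv_sign]
  refine Eq.congr (Finset.sum_congr rfl fun k _ => ?_) ?_
  · linear_combination
      (2 * (sign p * sign r) * (A a k * (A k j)⁻¹ * (B k i)⁻¹)) * hdd
  · linear_combination
      (2 * (sign p * sign r) * (B j i * (A a j)⁻¹ * (B a i)⁻¹)) * hdd

theorem starTriangle_upper (hA : IsTypeII A) (hB : IsTypeII B) (hs : A.IsSymm) (hd : d ≠ 0)
    (h : IsTheta A B A B) (hT : IsTheta A Bᵀ A Bᵀ) (x z : Fin 4 × Fin n) (r : Fin 2) (j : Fin n) :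
    StarTriangle (Vmat A B d) (2 * d) x z (upper r j) := by
  have upper_lower (p q : Fin 2) (a i : Fin n) :
      StarTriangle (Vmat A B d) (2 * d) (upper p a) (lower q i) (upper r j) := by
    exact (starTriangle_upper_lower_upper_iff hd p q r a i j).mpr
      (isTheta_iff_sum.mp (h.sinv_of_isSymm hA hB.1 hs) a j i)
  rcases eq_upper_or_eq_lower x with ⟨p, a, rfl⟩ | ⟨p, a, rfl⟩ <;>
    rcases eq_upper_or_eq_lower z with ⟨q, i, rfl⟩ | ⟨q, i, rfl⟩
  · exact (starTriangle_upper_upper_upper_iff hd p q r a i j).mpr (h.sum_div_mul hA hB hs a i j)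
  · exact upper_lower p q a i
  · exact (upper_lower q p i a).swap (isSymm hs)
  · rw [← swapHalves_upper p, ← swapHalves_upper q, ← swapHalves_lower r,
      ← starTriangle_transpose_iff, starTriangle_upper_upper_lower_iff hd]
    exact isTheta_iff_sum.mp hT a i j

theorem starTriangle_iff (hA : IsTypeII A) (hB : IsTypeII B) (hs : A.IsSymm) (hd : d ≠ 0) :
    (∀ x z y, StarTriangle (Vmat A B d) (2 * d) x z y) ↔
      IsTheta A B A B ∧ IsTheta A Bᵀ A Bᵀ := by
  refine ⟨fun h => ?_, fun ⟨h, hT⟩ x z y => ?_⟩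
  · simp only [isTheta_iff_sum, ← starTriangle_upper_upper_lower_iff hd 0 0 0,
      starTriangle_transpose_iff]
    exact ⟨fun _ _ _ => h _ _ _, fun _ _ _ => h _ _ _⟩
  · rcases eq_upper_or_eq_lower y with ⟨r, j, rfl⟩ | ⟨r, j, rfl⟩
    · exact starTriangle_upper hA hB hs hd h hT x z r j
    · obtain ⟨x, rfl⟩ := swapHalves.surjective x
      obtain ⟨z, rfl⟩ := swapHalves.surjective z
      rw [← swapHalves_upper, ← starTriangle_transpose_iff]
      exact starTriangle_upper hA hB.transpose hs hd hT h x z r j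

end Vmat

theorem yamada_general {n : ℕ} {A B : Matrix (Fin n) (Fin n) ℂ} (hA : IsTypeII A)
    (hB : IsTypeII B) (hs : A.IsSymm) {d : ℂ} (hd : d ≠ 0) :
    (Vmat A B d).IsSymm ∧
    IsTypeII (Vmat A B d) ∧
    (IsJonesPair A B ↔
      IsInvertibleJonesPair ((2 * d)⁻¹ • Vmat A B d) (sinv (Vmat A B d))) ∧
    (IsInvertibleJonesPair A B ↔
      IsInvertibleJonesPair ((2 * d)⁻¹ • Vmat A B d) (sinv (Vmat A B d))) := by
  have hV : IsTypeII (Vmat A B d) := Vmat.isTypeII hA hB hd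
  have hVs : (Vmat A B d).IsSymm := Vmat.isSymm hs
  have hJones : IsJonesPair A B ↔
      IsInvertibleJonesPair ((2 * d)⁻¹ • Vmat A B d) (sinv (Vmat A B d)) := by
    rw [hV.isInvertibleJonesPair_iff_starTriangle hVs (mul_ne_zero two_ne_zero hd),
      Vmat.starTriangle_iff hA hB hs hd, isJonesPair_iff_isTheta]
    exact ⟨fun h => h.2.2, fun h => ⟨hA.isUnit, hB.1, h⟩⟩
  have hinv : IsInvertibleJonesPair A B ↔ IsJonesPair A B :=
    ⟨And.left, fun h => ⟨h, hA.1, hB.isUnit⟩⟩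
  exact ⟨hVs, hV, hJones, hinv.trans hJones⟩

/-- Yamada's theorem. -/
theorem yamada {n : ℕ} (hn : 0 < n) (A B : Matrix (Fin n) (Fin n) ℂ)
    (hA : IsTypeII A) (hB : IsTypeII B) (hAs : Aᵀ = A)
    (d : ℂ) (hd : d ^ 2 = (n : ℂ)) :
    (Vmat A B d)ᵀ = Vmat A B d ∧
    IsTypeII (Vmat A B d) ∧
    (IsJonesPair A B ↔
      IsInvertibleJonesPair ((2 * d)⁻¹ • Vmat A B d) (sinv (Vmat A B d))) ∧
    (IsInvertibleJonesPair A B ↔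
      IsInvertibleJonesPair ((2 * d)⁻¹ • Vmat A B d) (sinv (Vmat A B d))) :=
  yamada_general hA hB hAs fun hd0 => hn.ne' (by simpa [hd0, eq_comm] using hd)
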